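/- arXiv:1611.01011 — 6 statements merged into one kernel-verified Lean document; each statement's English description precedes it below -/
import Mathlib

section
/- The Riemann zeta value ζ(2) = ∑_{n≥1} 1/n² equals the iterated integral over the open simplex {(x,y) : 0 < x < y < 1}: ∑_{n≥1} 1/n² = ∫_{0<x<y<1} 1/((1−x)·y) dx dy. -/
/-!
On the simplex `1 / ((1 - x) y) = ∑ₙ xⁿ / y` by the geometric series. All terms are nonnegative,
so in `ℝ≥0∞` the sum may be exchanged with the integral, and Tonelli gives
`∫₀¹ ∫₀ʸ xⁿ / y dx dy = ∫₀¹ yⁿ / (n + 1) dy = 1 / (n + 1)²` (`lintegral_simplex_monomial`).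
Since the resulting series converges, the identity descends from `ℝ≥0∞` to `ℝ`.
-/

open MeasureTheory Real

lemma lintegral_Ioo_pow (n : ℕ) {a : ℝ} (ha : 0 ≤ a) :
    ∫⁻ x in Set.Ioo 0 a, ENNReal.ofReal (x ^ n) = ENNReal.ofReal (a ^ (n + 1) / (n + 1)) := by
  have hint : IntegrableOn (fun x : ℝ => x ^ n) (Set.Ioo 0 a) :=
    ((continuous_pow n).integrableOn_Icc (a := 0) (b := a)).mono_set Set.Ioo_subset_Icc_self
  rw [← ofReal_integral_eq_lintegral_ofReal hint, ← integral_Ioc_eq_integral_Ioo,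
    ← intervalIntegral.integral_of_le ha, integral_pow]
  · simp
  · filter_upwards [ae_restrict_mem measurableSet_Ioo] with x hx
    exact pow_nonneg hx.1.le n

lemma measurableSet_simplex :
    MeasurableSet {p : ℝ × ℝ | 0 < p.1 ∧ p.1 < p.2 ∧ p.2 < 1} :=
  (measurableSet_lt measurable_const measurable_fst).inter
    ((measurableSet_lt measurable_fst measurable_snd).inter
      (measurableSet_lt measurable_snd measurable_const))

lemma lintegral_simplex_monomial (n : ℕ) :
    ∫⁻ p in {p : ℝ × ℝ | 0 < p.1 ∧ p.1 < p.2 ∧ p.2 < 1}, ENNReal.ofReal (p.1 ^ n / p.2) =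
      ENNReal.ofReal (1 / ((n : ℝ) + 1) ^ 2) := by
  have hn : (0 : ℝ) < n + 1 := by positivity
  have hmeas : Measurable fun p : ℝ × ℝ => ENNReal.ofReal (p.1 ^ n / p.2) := by fun_prop
  rw [← lintegral_indicator measurableSet_simplex, Measure.volume_eq_prod,
    lintegral_prod_symm' _ (hmeas.indicator measurableSet_simplex)]
  have inner : ∀ y : ℝ,
      ∫⁻ x, Set.indicator {p : ℝ × ℝ | 0 < p.1 ∧ p.1 < p.2 ∧ p.2 < 1}
        (fun p => ENNReal.ofReal (p.1 ^ n / p.2)) (x, y) =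
      (Set.Ioo (0 : ℝ) 1).indicator
        (fun y => ENNReal.ofReal (1 / (n + 1)) * ENNReal.ofReal (y ^ n)) y := by
    intro y
    by_cases hy : y ∈ Set.Ioo (0 : ℝ) 1
    · have hy0 : 0 < y := hy.1
      have slice : ∀ x : ℝ, Set.indicator {p : ℝ × ℝ | 0 < p.1 ∧ p.1 < p.2 ∧ p.2 < 1}
          (fun p => ENNReal.ofReal (p.1 ^ n / p.2)) (x, y) =
          (Set.Ioo 0 y).indicator
            (fun x => ENNReal.ofReal (1 / y) * ENNReal.ofReal (x ^ n)) x := by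
        intro x
        by_cases hx : x ∈ Set.Ioo 0 y
        · have hxy : (x, y) ∈ {p : ℝ × ℝ | 0 < p.1 ∧ p.1 < p.2 ∧ p.2 < 1} :=
            ⟨hx.1, hx.2, hy.2⟩
          rw [Set.indicator_of_mem hx, Set.indicator_of_mem hxy, ← ENNReal.ofReal_mul (by positivity)]
          congr 1
          ring
        · rw [Set.indicator_of_notMem hx, Set.indicator_of_notMem]
          exact fun h => hx ⟨h.1, h.2.1⟩
      simp_rw [slice]
      rw [lintegral_indicator measurableSet_Ioo, lintegral_const_mul _ (by fun_prop),
        lintegral_Ioo_pow n hy0.le, Set.indicator_of_mem hy,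
        ← ENNReal.ofReal_mul (by positivity), ← ENNReal.ofReal_mul (by positivity)]
      congr 1
      field_simp
      ring
    · rw [Set.indicator_of_notMem hy, ← lintegral_zero (μ := (volume : Measure ℝ))]
      congr 1
      ext x
      rw [Set.indicator_of_notMem]
      exact fun h => hy ⟨h.1.trans h.2.1, h.2.2⟩
  simp_rw [inner]
  rw [lintegral_indicator measurableSet_Ioo, lintegral_const_mul _ (by fun_prop),
    lintegral_Ioo_pow n zero_le_one, ← ENNReal.ofReal_mul (by positivity)]
  congr 1
  field_simp
  simp

/-- ζ(2) = ∑_{n≥1} 1/n² equals the Lebesgue integral of 1/((1-x)·y) over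
the open simplex {(x,y) : 0 < x < y < 1}. -/
theorem zeta_two_eq_simplex_integral :
    (∑' n : ℕ+, 1 / (n : ℝ) ^ 2) =
      ∫ p in {p : ℝ × ℝ | 0 < p.1 ∧ p.1 < p.2 ∧ p.2 < 1},
        1 / ((1 - p.1) * p.2) := by
  have hsum : Summable fun n : ℕ => 1 / ((n : ℝ) + 1) ^ 2 := by
    simpa using (summable_nat_add_iff 1).2 hasSum_zeta_two.summable
  have hshift : (∑' n : ℕ+, 1 / (n : ℝ) ^ 2) = ∑' n : ℕ, 1 / ((n : ℝ) + 1) ^ 2 := by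
    rw [tsum_pnat_eq_tsum_succ (f := fun n : ℕ => 1 / (n : ℝ) ^ 2)]
    simp
  have hnonneg : 0 ≤ᵐ[volume.restrict {p : ℝ × ℝ | 0 < p.1 ∧ p.1 < p.2 ∧ p.2 < 1}]
      fun p => 1 / ((1 - p.1) * p.2) := by
    filter_upwards [ae_restrict_mem measurableSet_simplex] with p ⟨h0, h1, h2⟩
    exact one_div_nonneg.2 (mul_nonneg (by linarith) (by linarith))
  have hmeas : Measurable fun p : ℝ × ℝ => 1 / ((1 - p.1) * p.2) := by fun_prop
  have hgeom : ∫⁻ p in {p : ℝ × ℝ | 0 < p.1 ∧ p.1 < p.2 ∧ p.2 < 1},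
        ENNReal.ofReal (1 / ((1 - p.1) * p.2)) =
      ∫⁻ p in {p : ℝ × ℝ | 0 < p.1 ∧ p.1 < p.2 ∧ p.2 < 1},
        ∑' n : ℕ, ENNReal.ofReal (p.1 ^ n / p.2) := by
    refine setLIntegral_congr_fun measurableSet_simplex ?_
    rintro ⟨x, y⟩ ⟨h0, h1, h2⟩
    dsimp only at h0 h1 h2 ⊢
    have hs : HasSum (fun n : ℕ => x ^ n / y) ((1 - x)⁻¹ / y) :=
      (hasSum_geometric_of_lt_one h0.le (h1.trans h2)).div_const y
    rw [← ENNReal.ofReal_tsum_of_nonneg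
      (fun n => div_nonneg (pow_nonneg h0.le n) (h0.trans h1).le) hs.summable, hs.tsum_eq]
    congr 1
    rw [one_div, mul_inv, div_eq_mul_inv]
  rw [hshift, integral_eq_lintegral_of_nonneg_ae hnonneg hmeas.aestronglyMeasurable, hgeom,
    lintegral_tsum (fun n => by fun_prop)]
  simp_rw [lintegral_simplex_monomial]
  rw [← ENNReal.ofReal_tsum_of_nonneg (fun n => by positivity) hsum,
    ENNReal.toReal_ofReal (tsum_nonneg fun n => by positivity)]
end

section
/- The Riemann zeta value ζ(3) = ∑_{n≥1} 1/n³ equals the iterated integral over the open simplex {(x,y,z) : 0 < x < y < z < 1}: ∑_{n≥1} 1/n³ = ∫_{0<x<y<z<1} 1/((1−x)·y·z) dx dy dz. -/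
open MeasureTheory Real

/-!
On the simplex, `1 / ((1 - x) y z) = ∑ₙ xⁿ / (y z)`, a series of nonnegative terms. Tonelli's theorem
therefore allows integrating term by term (`lintegral_tsum`) and, for each term, in the order
`x`, `y`, `z` (`setLIntegral_simplex`). Each of the three integrations replaces a monomial `tⁿ` by
`aⁿ⁺¹ / (n + 1)` and the factors `1 / y`, `1 / z` lower the exponent back to `n`, so the `n`-th term
contributes `1 / (n + 1)³`. Working in `ℝ≥0∞` avoids any separate integrability argument.
-/

/-- Tonelli's theorem on the simplex, with `x` as the innermost variable. -/
lemma setLIntegral_simplex (f : ℝ × ℝ × ℝ → ENNReal) (hf : Measurable f) :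
    ∫⁻ p in {p : ℝ × ℝ × ℝ | 0 < p.1 ∧ p.1 < p.2.1 ∧ p.2.1 < p.2.2 ∧ p.2.2 < 1}, f p =
      ∫⁻ z in Set.Ioo (0 : ℝ) 1, ∫⁻ y in Set.Ioo 0 z, ∫⁻ x in Set.Ioo 0 y, f (x, y, z) := by
  have hS : MeasurableSet
      {p : ℝ × ℝ × ℝ | 0 < p.1 ∧ p.1 < p.2.1 ∧ p.2.1 < p.2.2 ∧ p.2.2 < 1} := by
    measurability
  have hm := hf.indicator hS
  rw [← lintegral_indicator hS, Measure.volume_eq_prod, lintegral_prod_symm _ hm.aemeasurable,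
    Measure.volume_eq_prod, lintegral_prod_symm _ hm.lintegral_prod_left'.aemeasurable,
    ← lintegral_indicator measurableSet_Ioo]
  refine lintegral_congr fun z => ?_
  by_cases hz : z ∈ Set.Ioo (0 : ℝ) 1
  · rw [Set.indicator_of_mem hz, ← lintegral_indicator measurableSet_Ioo]
    refine lintegral_congr fun y => ?_
    by_cases hy : y ∈ Set.Ioo 0 z
    · rw [Set.indicator_of_mem hy, ← lintegral_indicator measurableSet_Ioo]
      refine lintegral_congr fun x => ?_
      simp only [Set.indicator, Set.mem_ofPred_eq, Set.mem_Ioo] at *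
      simp [hy.2, hz.2]
    · rw [Set.indicator_of_notMem hy, lintegral_eq_zero_of_ae_eq_zero]
      refine Filter.Eventually.of_forall fun x => Set.indicator_of_notMem ?_ _
      rintro ⟨h1, h2, h3, -⟩
      exact hy ⟨h1.trans h2, h3⟩
  · rw [Set.indicator_of_notMem hz, lintegral_eq_zero_of_ae_eq_zero]
    refine Filter.Eventually.of_forall fun y =>
      lintegral_eq_zero_of_ae_eq_zero <| Filter.Eventually.of_forall fun x =>
        Set.indicator_of_notMem ?_ _
    rintro ⟨h1, h2, h3, h4⟩
    exact hz ⟨(h1.trans h2).trans h3, h4⟩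

lemma setLIntegral_Ioo_const_mul_pow (n : ℕ) {a c : ℝ} (ha : 0 ≤ a) (hc : 0 ≤ c) :
    ∫⁻ x in Set.Ioo 0 a, ENNReal.ofReal (c * x ^ n) =
      ENNReal.ofReal (c * (a ^ (n + 1) / (n + 1))) := by
  rw [← ofReal_integral_eq_lintegral_ofReal]
  · rw [← integral_Ioc_eq_integral_Ioo, ← intervalIntegral.integral_of_le ha]
    simp
  · exact ((by fun_prop : Continuous fun x : ℝ => c * x ^ n).integrableOn_Icc).mono_set
      Set.Ioo_subset_Icc_self
  · filter_upwards [ae_restrict_mem measurableSet_Ioo] with x hx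
    have := hx.1.le
    positivity

lemma setLIntegral_simplex_term (n : ℕ) :
    ∫⁻ p in {p : ℝ × ℝ × ℝ | 0 < p.1 ∧ p.1 < p.2.1 ∧ p.2.1 < p.2.2 ∧ p.2.2 < 1},
      ENNReal.ofReal (1 / (p.2.1 * p.2.2) * p.1 ^ n) = ENNReal.ofReal (1 / ((n : ℝ) + 1) ^ 3) := by
  rw [setLIntegral_simplex _ (by fun_prop)]
  have hx : ∀ z : ℝ, 0 < z → ∀ y ∈ Set.Ioo 0 z,
      ∫⁻ x in Set.Ioo 0 y, ENNReal.ofReal (1 / (y * z) * x ^ n) =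
        ENNReal.ofReal (1 / (z * (n + 1)) * y ^ n) := by
    intro z hz y hy
    have hy0 := hy.1
    rw [setLIntegral_Ioo_const_mul_pow n hy0.le (by positivity)]
    congr 1
    field_simp
    ring
  have hy : ∀ z ∈ Set.Ioo (0 : ℝ) 1,
      ∫⁻ y in Set.Ioo 0 z, ∫⁻ x in Set.Ioo 0 y, ENNReal.ofReal (1 / (y * z) * x ^ n) =
        ENNReal.ofReal (1 / ((n : ℝ) + 1) ^ 2 * z ^ n) := by
    intro z hz
    have hz0 := hz.1
    rw [setLIntegral_congr_fun measurableSet_Ioo (hx z hz0),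
      setLIntegral_Ioo_const_mul_pow n hz0.le (by positivity)]
    congr 1
    field_simp
    ring
  rw [setLIntegral_congr_fun measurableSet_Ioo hy,
    setLIntegral_Ioo_const_mul_pow n zero_le_one (by positivity)]
  congr 1
  field_simp
  simp

/-- ζ(3) = ∑_{n≥1} 1/n³ equals the Lebesgue integral of 1/((1-x)·y·z) over
the open simplex {(x,y,z) : 0 < x < y < z < 1}. -/
theorem zeta_three_eq_simplex_integral :
    (∑' n : ℕ+, 1 / (n : ℝ) ^ 3) =
      ∫ p in {p : ℝ × ℝ × ℝ | 0 < p.1 ∧ p.1 < p.2.1 ∧ p.2.1 < p.2.2 ∧ p.2.2 < 1},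
        1 / ((1 - p.1) * p.2.1 * p.2.2) := by
  have hS : MeasurableSet
      {p : ℝ × ℝ × ℝ | 0 < p.1 ∧ p.1 < p.2.1 ∧ p.2.1 < p.2.2 ∧ p.2.2 < 1} := by
    measurability
  have hsum : Summable fun n : ℕ => 1 / ((n : ℝ) + 1) ^ 3 := by
    have h := (summable_nat_add_iff 1).2 (Real.summable_one_div_nat_pow.2 (by norm_num : 1 < 3))
    simpa using h
  rw [integral_eq_lintegral_of_nonneg_ae]
  · have hgeom : ∀ p ∈ {p : ℝ × ℝ × ℝ | 0 < p.1 ∧ p.1 < p.2.1 ∧ p.2.1 < p.2.2 ∧ p.2.2 < 1},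
        ENNReal.ofReal (1 / ((1 - p.1) * p.2.1 * p.2.2)) =
          ∑' n : ℕ, ENNReal.ofReal (1 / (p.2.1 * p.2.2) * p.1 ^ n) := by
      rintro ⟨x, y, z⟩ ⟨h1, h2, h3, h4⟩
      dsimp only at *
      have hy : 0 < y := h1.trans h2
      have hz : 0 < z := hy.trans h3
      have hx : x < 1 := (h2.trans h3).trans h4
      rw [← ENNReal.ofReal_tsum_of_nonneg (fun n => by positivity)
        ((summable_geometric_of_lt_one h1.le hx).mul_left _), tsum_mul_left,
        tsum_geometric_of_lt_one h1.le hx]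
      congr 1
      rw [mul_assoc, one_div, one_div, mul_inv, mul_comm]
    rw [setLIntegral_congr_fun hS hgeom, lintegral_tsum fun n => by fun_prop]
    simp_rw [setLIntegral_simplex_term]
    rw [← ENNReal.ofReal_tsum_of_nonneg (fun n => by positivity) hsum,
      ENNReal.toReal_ofReal (tsum_nonneg fun n => by positivity),
      tsum_pnat_eq_tsum_succ (f := fun n : ℕ => 1 / (n : ℝ) ^ 3)]
    simp
  · filter_upwards [ae_restrict_mem hS] with p hp
    obtain ⟨h1, h2, h3, h4⟩ := hp
    have hy : 0 < p.2.1 := h1.trans h2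
    have hz : 0 < p.2.2 := hy.trans h3
    have hx : 0 < 1 - p.1 := sub_pos.2 ((h2.trans h3).trans h4)
    simp only [Pi.zero_apply]
    positivity
  · exact (by fun_prop : Measurable fun p : ℝ × ℝ × ℝ =>
      1 / ((1 - p.1) * p.2.1 * p.2.2)).aestronglyMeasurable
end

section
/- The multiple zeta value ζ(1,2) = ∑_{0<n₁<n₂} 1/(n₁·n₂²) equals the iterated integral over the open simplex {(x,y,z) : 0 < x < y < z < 1}: ∑_{0<n₁<n₂} 1/(n₁·n₂²) = ∫_{0<x<y<z<1} 1/((1−x)·(1−y)·z) dx dy dz. -/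
open MeasureTheory Real

/-!
Both sides are evaluated in `ℝ≥0∞`, where Tonelli and termwise integration need no finiteness.
On the simplex `0 < x < y < z < 1`, expanding `1/(1-x)` and `1/(1-y)` as geometric series turns the
integrand into `∑ x^a y^b z⁻¹` over `(a, b) ∈ ℕ × ℕ`. Integrating each monomial in `x`, then `y`,
then `z` gives `1/((a+1)(a+b+2)^2)` (`lintegral_monomial`), and `n₁ = a+1`, `n₂ = a+b+2` is a
bijection from `ℕ × ℕ` onto the pairs `0 < n₁ < n₂` (`pairEquiv`).
-/

/-- The open simplex `0 < x < y < z < 1`. -/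
def openSimplex : Set (ℝ × ℝ × ℝ) :=
  {p | 0 < p.1 ∧ p.1 < p.2.1 ∧ p.2.1 < p.2.2 ∧ p.2.2 < 1}

lemma measurableSet_openSimplex : MeasurableSet openSimplex := by
  have hy : Continuous fun p : ℝ × ℝ × ℝ => p.2.1 := by fun_prop
  have hz : Continuous fun p : ℝ × ℝ × ℝ => p.2.2 := by fun_prop
  exact ((isOpen_lt continuous_const continuous_fst).inter ((isOpen_lt continuous_fst hy).inter
    ((isOpen_lt hy hz).inter (isOpen_lt hz continuous_const)))).measurableSet

lemma setLIntegral_openSimplex (F : ℝ × ℝ × ℝ → ENNReal) (hF : Measurable F) :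
    ∫⁻ p in openSimplex, F p =
      ∫⁻ z in Set.Ioo (0 : ℝ) 1, ∫⁻ y in Set.Ioo 0 z, ∫⁻ x in Set.Ioo 0 y, F (x, y, z) := by
  have hG : Measurable (openSimplex.indicator F) := hF.indicator measurableSet_openSimplex
  rw [← lintegral_indicator measurableSet_openSimplex, Measure.volume_eq_prod,
    lintegral_prod_symm' _ hG, Measure.volume_eq_prod,
    lintegral_prod_symm' _ hG.lintegral_prod_left', ← lintegral_indicator measurableSet_Ioo]
  refine lintegral_congr fun z => ?_
  by_cases hz : z ∈ Set.Ioo (0 : ℝ) 1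
  · rw [Set.indicator_of_mem hz, ← lintegral_indicator measurableSet_Ioo]
    refine lintegral_congr fun y => ?_
    by_cases hy : y ∈ Set.Ioo (0 : ℝ) z
    · rw [Set.indicator_of_mem hy, ← lintegral_indicator measurableSet_Ioo]
      refine lintegral_congr fun x => ?_
      by_cases hx : x ∈ Set.Ioo (0 : ℝ) y
      · rw [Set.indicator_of_mem hx, Set.indicator_of_mem]
        exact ⟨hx.1, hx.2, hy.2, hz.2⟩
      · rw [Set.indicator_of_notMem hx, Set.indicator_of_notMem]
        exact fun h => hx ⟨h.1, h.2.1⟩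
    · rw [Set.indicator_of_notMem hy, lintegral_eq_zero_of_ae_eq_zero]
      refine Filter.Eventually.of_forall fun x => Set.indicator_of_notMem ?_ _
      exact fun h => hy ⟨h.1.trans h.2.1, h.2.2.1⟩
  · rw [Set.indicator_of_notMem hz, lintegral_eq_zero_of_ae_eq_zero]
    refine Filter.Eventually.of_forall fun y => ?_
    refine lintegral_eq_zero_of_ae_eq_zero
      (Filter.Eventually.of_forall fun x => Set.indicator_of_notMem ?_ _)
    exact fun h => hz ⟨h.1.trans (h.2.1.trans h.2.2.1), h.2.2.2⟩

lemma lintegral_pow_Ioo (n : ℕ) {t c : ℝ} (ht : 0 ≤ t) (hc : 0 ≤ c) :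
    ∫⁻ x in Set.Ioo 0 t, ENNReal.ofReal (x ^ n * c) =
      ENNReal.ofReal (t ^ (n + 1) / (n + 1) * c) := by
  rw [← ofReal_integral_eq_lintegral_ofReal]
  · rw [← integral_Ioc_eq_integral_Ioo, ← intervalIntegral.integral_of_le ht]
    simp
  · exact ((by fun_prop : Continuous fun x : ℝ => x ^ n * c).integrableOn_Icc
      (a := 0) (b := t)).mono_set Set.Ioo_subset_Icc_self
  · filter_upwards [ae_restrict_mem measurableSet_Ioo] with x hx
    exact mul_nonneg (pow_nonneg hx.1.le n) hc

lemma lintegral_monomial (a b : ℕ) :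
    ∫⁻ p in openSimplex, ENNReal.ofReal (p.1 ^ a * (p.2.1 ^ b * p.2.2⁻¹)) =
      ENNReal.ofReal (1 / (((a + 1 : ℕ) : ℝ) * ((a + b + 2 : ℕ) : ℝ) ^ 2)) := by
  rw [setLIntegral_openSimplex _ (by fun_prop)]
  have hy : ∀ z ∈ Set.Ioo (0 : ℝ) 1, ∀ y ∈ Set.Ioo 0 z,
      ∫⁻ x in Set.Ioo 0 y, ENNReal.ofReal (x ^ a * (y ^ b * z⁻¹)) =
        ENNReal.ofReal (y ^ (a + b + 1) * (z⁻¹ / (a + 1))) := by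
    intro z hz y hy
    rw [lintegral_pow_Ioo a hy.1.le (mul_nonneg (pow_nonneg hy.1.le b) (inv_nonneg.2 hz.1.le))]
    congr 1
    ring
  have hz : ∀ z ∈ Set.Ioo (0 : ℝ) 1,
      ∫⁻ y in Set.Ioo 0 z, ∫⁻ x in Set.Ioo 0 y, ENNReal.ofReal (x ^ a * (y ^ b * z⁻¹)) =
        ENNReal.ofReal (z ^ (a + b + 1) * (1 / ((a + 1) * (a + b + 2)))) := by
    intro z hz
    have := hz.1
    rw [setLIntegral_congr_fun measurableSet_Ioo (hy z hz),
      lintegral_pow_Ioo _ hz.1.le (by positivity)]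
    congr 1
    push_cast
    have h : (a : ℝ) + b + 1 + 1 ≠ 0 := by positivity
    have h' : (a : ℝ) + b + 2 ≠ 0 := by positivity
    field_simp
    ring
  rw [setLIntegral_congr_fun measurableSet_Ioo hz,
    lintegral_pow_Ioo _ zero_le_one (by positivity)]
  congr 1
  push_cast
  have h : (a : ℝ) + b + 1 + 1 ≠ 0 := by positivity
  have h' : (a : ℝ) + b + 2 ≠ 0 := by positivity
  field_simp
  ring

lemma ofReal_inv_one_sub {x : ℝ} (h0 : 0 ≤ x) (h1 : x < 1) :
    ENNReal.ofReal (1 - x)⁻¹ = ∑' a : ℕ, ENNReal.ofReal (x ^ a) := by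
  rw [← tsum_geometric_of_lt_one h0 h1]
  exact ENNReal.ofReal_tsum_of_nonneg (fun n => pow_nonneg h0 n)
    (summable_geometric_of_lt_one h0 h1)

lemma integrand_eq_tsum {p : ℝ × ℝ × ℝ} (hp : p ∈ openSimplex) :
    ENNReal.ofReal (1 / ((1 - p.1) * (1 - p.2.1) * p.2.2)) =
      ∑' q : ℕ × ℕ, ENNReal.ofReal (p.1 ^ q.1 * (p.2.1 ^ q.2 * p.2.2⁻¹)) := by
  obtain ⟨x, y, z⟩ := p
  obtain ⟨hx, hxy, hyz, hz⟩ := hp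
  simp only at hx hxy hyz hz ⊢
  have hy := hx.trans hxy
  have hx1 : 0 < 1 - x := by linarith
  have hy1 : 0 < 1 - y := by linarith
  have e : 1 / ((1 - x) * (1 - y) * z) = (1 - x)⁻¹ * ((1 - y)⁻¹ * z⁻¹) := by
    rw [one_div, mul_inv, mul_inv, mul_assoc]
  rw [e, ENNReal.ofReal_mul (by positivity), ENNReal.ofReal_mul (by positivity),
    ofReal_inv_one_sub hx.le (by linarith), ofReal_inv_one_sub hy.le (by linarith),
    ENNReal.tsum_prod', ← ENNReal.tsum_mul_right]
  refine tsum_congr fun a => ?_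
  rw [← ENNReal.tsum_mul_right, ← ENNReal.tsum_mul_left]
  refine tsum_congr fun b => ?_
  rw [ENNReal.ofReal_mul (by positivity), ENNReal.ofReal_mul (by positivity)]

/-- The reindexing `(a, b) ↦ (n₁, n₂) = (a + 1, a + b + 2)`. -/
def pairEquiv : ℕ × ℕ ≃ {p : ℕ × ℕ // 0 < p.1 ∧ p.1 < p.2} where
  toFun q := ⟨(q.1 + 1, q.1 + q.2 + 2), by constructor <;> simp only <;> omega⟩
  invFun n := (n.1.1 - 1, n.1.2 - n.1.1 - 1)
  left_inv q := by ext <;> simp only <;> omega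
  right_inv n := by
    obtain ⟨⟨m, n⟩, h1, h2⟩ := n
    simp only at h1 h2
    ext <;> simp only <;> omega

/-- ζ(1,2) = ∑_{0<n₁<n₂} 1/(n₁·n₂²) equals the Lebesgue integral of
1/((1-x)·(1-y)·z) over the open simplex {(x,y,z) : 0 < x < y < z < 1}. -/
theorem zeta_one_two_eq_simplex_integral :
    (∑' n : {p : ℕ × ℕ // 0 < p.1 ∧ p.1 < p.2},
        1 / (((n : ℕ × ℕ).1 : ℝ) * ((n : ℕ × ℕ).2 : ℝ) ^ 2)) =
      ∫ p in {p : ℝ × ℝ × ℝ | 0 < p.1 ∧ p.1 < p.2.1 ∧ p.2.1 < p.2.2 ∧ p.2.2 < 1},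
        1 / ((1 - p.1) * (1 - p.2.1) * p.2.2) := by
  change _ = ∫ p in openSimplex, 1 / ((1 - p.1) * (1 - p.2.1) * p.2.2)
  rw [integral_eq_lintegral_of_nonneg_ae,
    setLIntegral_congr_fun measurableSet_openSimplex fun p hp => integrand_eq_tsum hp,
    lintegral_tsum fun q => by fun_prop, tsum_congr fun q : ℕ × ℕ => lintegral_monomial q.1 q.2,
    ENNReal.tsum_toReal_eq fun q => ENNReal.ofReal_ne_top, ← pairEquiv.tsum_eq]
  · refine tsum_congr fun q => ?_
    rw [ENNReal.toReal_ofReal (by positivity)]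
    rfl
  · filter_upwards [ae_restrict_mem measurableSet_openSimplex] with p hp
    obtain ⟨hx, hxy, hyz, hz⟩ := hp
    have hx1 : 0 < 1 - p.1 := by linarith
    have hy1 : 0 < 1 - p.2.1 := by linarith
    have hz0 : 0 < p.2.2 := by linarith
    simp only [Pi.zero_apply]
    positivity
  · exact (by fun_prop : Measurable fun p : ℝ × ℝ × ℝ =>
      1 / ((1 - p.1) * (1 - p.2.1) * p.2.2)).aestronglyMeasurable
end

section
/- The Dedekind zeta value of the cone, ζ_{K;C}(2) = ∑_{γ∈C} 1/N(γ)², equals the iterated integral ∫_0^∞ ∫_0^∞ (∫_{u₁}^∞ ∫_{u₂}^∞ f₀(C; t₁, t₂) dt₁ dt₂) du₁ du₂; equivalently, the Lebesgue integral of f₀(C; t₁, t₂) over the region {(t₁,t₂,u₁,u₂) ∈ ℝ⁴ : t₁ > u₁ > 0, t₂ > u₂ > 0} equals ∑_{γ∈C} 1/(γ₁γ₂)². -/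
/-!
For a single cone element with embeddings `c, d > 0`, the integral of `exp (-c t₁ - d t₂)` over the
region `0 < u₁ < t₁`, `0 < u₂ < t₂` is `(∫ t e^{-ct} dt) (∫ t e^{-dt} dt) = 1 / (c d) ^ 2`: for fixed
`(t₁, t₂)` the slice in `(u₁, u₂)` is a rectangle of area `t₁ t₂` (`lintegral_coneRegion`).
Since `γ₁ ≥ b` and `γ₂ ≥ a` for `γ = a + b β`, the sum of these values is dominated by
`∑ 1 / (a ^ 2 b ^ 2)` (`summable_cone`), and all the terms are positive, so sum and integral may be
interchanged.
-/

open MeasureTheory Real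

/-- First/second real embedding of the cone element γ = a + b·β (a, b positive
integers), with σⱼ(β) = β. -/
noncomputable def coneEmb (β : ℝ) (p : ℕ+ × ℕ+) : ℝ := (p.1 : ℝ) + (p.2 : ℝ) * β

/-- The generating function of the cone, f₀(C;t₁,t₂) = ∑_{γ∈C} exp(−γ₁t₁ − γ₂t₂). -/
noncomputable def coneGenFun (β₁ β₂ : ℝ) (t₁ t₂ : ℝ) : ℝ :=
  ∑' p : ℕ+ × ℕ+, exp (-(coneEmb β₁ p * t₁) - coneEmb β₂ p * t₂)

/-- The region `t₁ > u₁ > 0`, `t₂ > u₂ > 0`, with coordinates ordered `(t₁, t₂, u₁, u₂)`. -/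
def coneRegion : Set (ℝ × ℝ × ℝ × ℝ) :=
  {q | q.2.2.1 < q.1 ∧ 0 < q.2.2.1 ∧ q.2.2.2 < q.2.1 ∧ 0 < q.2.2.2}

lemma measurableSet_coneRegion : MeasurableSet coneRegion := by
  unfold coneRegion
  measurability

lemma lintegral_exp_mul_id {c : ℝ} (hc : 0 < c) :
    ∫⁻ t : ℝ, ENNReal.ofReal (exp (-(c * t))) * ENNReal.ofReal t = ENNReal.ofReal (1 / c ^ 2) := by
  have hI : ∫ t in Set.Ioi (0 : ℝ), t * exp (-(c * t)) = 1 / c ^ 2 := by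
    have h := Real.integral_rpow_mul_exp_neg_mul_Ioi (a := 2) (r := c) (by norm_num) hc
    have h2 : (2 : ℝ) - 1 = 1 := by norm_num
    simpa [h2] using h
  have hint : IntegrableOn (fun t : ℝ => t * exp (-(c * t))) (Set.Ioi 0) := by
    -- a non-integrable function would have integral `0`, contradicting the value in `hI`
    by_contra h
    rw [integral_undef h] at hI
    have : 0 < 1 / c ^ 2 := by positivity
    linarith
  rw [← hI, ofReal_integral_eq_lintegral_ofReal hint]
  · rw [← lintegral_indicator measurableSet_Ioi]
    refine lintegral_congr fun t => ?_
    by_cases ht : 0 < t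
    · rw [Set.indicator_of_mem (Set.mem_Ioi.2 ht), mul_comm t, ENNReal.ofReal_mul (exp_pos _).le]
    · rw [Set.indicator_of_notMem (by simpa using ht), ENNReal.ofReal_of_nonpos (not_lt.1 ht),
        mul_zero]
  · filter_upwards [ae_restrict_mem measurableSet_Ioi] with t ht
    have : 0 < t := ht
    simp only [Pi.zero_apply]
    positivity

lemma lintegral_coneRegion {c d : ℝ} (hc : 0 < c) (hd : 0 < d) :
    ∫⁻ q in coneRegion, ENNReal.ofReal (exp (-(c * q.1) - d * q.2.1)) =
      ENNReal.ofReal (1 / (c * d) ^ 2) := by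
  have hm : Measurable (coneRegion.indicator
      fun q : ℝ × ℝ × ℝ × ℝ => ENNReal.ofReal (exp (-(c * q.1) - d * q.2.1))) :=
    Measurable.indicator (by fun_prop) measurableSet_coneRegion
  rw [← lintegral_indicator measurableSet_coneRegion, Measure.volume_eq_prod,
    lintegral_prod _ hm.aemeasurable]
  have key : ∀ t₁ : ℝ, ∫⁻ y : ℝ × ℝ × ℝ, coneRegion.indicator
      (fun q : ℝ × ℝ × ℝ × ℝ => ENNReal.ofReal (exp (-(c * q.1) - d * q.2.1))) (t₁, y) =
      ENNReal.ofReal (exp (-(c * t₁))) * ENNReal.ofReal t₁ * ENNReal.ofReal (1 / d ^ 2) := by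
    intro t₁
    have hm' : Measurable fun y : ℝ × ℝ × ℝ => coneRegion.indicator
        (fun q : ℝ × ℝ × ℝ × ℝ => ENNReal.ofReal (exp (-(c * q.1) - d * q.2.1))) (t₁, y) :=
      hm.comp measurable_prodMk_left
    rw [Measure.volume_eq_prod, lintegral_prod _ hm'.aemeasurable,
      ← lintegral_exp_mul_id hd, ← lintegral_const_mul _ (by fun_prop)]
    refine lintegral_congr fun t₂ => ?_
    -- the slice of the region over `(t₁, t₂)` is a rectangle of area `t₁ t₂`
    have hs : (fun w : ℝ × ℝ => coneRegion.indicator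
        (fun q : ℝ × ℝ × ℝ × ℝ => ENNReal.ofReal (exp (-(c * q.1) - d * q.2.1))) (t₁, t₂, w)) =
        (Set.Ioo 0 t₁ ×ˢ Set.Ioo 0 t₂).indicator
          fun _ => ENNReal.ofReal (exp (-(c * t₁) - d * t₂)) := by
      classical
      funext w
      simp only [Set.indicator_apply]
      refine if_congr ?_ rfl rfl
      simp only [coneRegion, Set.mem_ofPred_eq, Set.mem_prod, Set.mem_Ioo]
      tauto
    rw [hs, lintegral_indicator_const (measurableSet_Ioo.prod measurableSet_Ioo),
      Measure.volume_eq_prod, Measure.prod_prod, Real.volume_Ioo, Real.volume_Ioo, sub_zero,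
      sub_zero, sub_eq_add_neg, exp_add, ENNReal.ofReal_mul (exp_pos _).le]
    ring
  rw [lintegral_congr key, lintegral_mul_const _ (by fun_prop), lintegral_exp_mul_id hc,
    ← ENNReal.ofReal_mul (by positivity)]
  congr 1
  field_simp

lemma coneEmb_pos {β : ℝ} (hβ : 0 < β) (p : ℕ+ × ℕ+) : 0 < coneEmb β p := by
  have h1 : (0 : ℝ) < p.1 := by exact_mod_cast p.1.pos
  have h2 : (0 : ℝ) < p.2 := by exact_mod_cast p.2.pos
  unfold coneEmb
  positivity

lemma summable_cone {β₁ β₂ : ℝ} (hβ₁ : 1 < β₁) (hβ₂ : 0 < β₂) :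
    Summable fun p : ℕ+ × ℕ+ => 1 / (coneEmb β₁ p * coneEmb β₂ p) ^ 2 := by
  have hs : Summable fun n : ℕ+ => 1 / ((n : ℕ) : ℝ) ^ 2 :=
    (Real.summable_one_div_nat_pow.2 one_lt_two).comp_injective PNat.coe_injective
  have hprod := hs.mul_of_nonneg hs (fun _ => by positivity) (fun _ => by positivity)
  refine Summable.of_nonneg_of_le (fun _ => by positivity) (fun p => ?_) hprod
  have h1 : (0 : ℝ) < p.1 := by exact_mod_cast p.1.pos
  have h2 : (0 : ℝ) < p.2 := by exact_mod_cast p.2.pos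
  have e1 : (p.2 : ℝ) ≤ coneEmb β₁ p := by unfold coneEmb; nlinarith
  have e2 : (p.1 : ℝ) ≤ coneEmb β₂ p := by unfold coneEmb; nlinarith
  rw [one_div_mul_one_div, ← mul_pow, mul_comm (p.1 : ℝ)]
  gcongr
  exact h2.le.trans e1

/-- ζ_{K;C}(2) = ∑_{γ∈C} 1/N(γ)² equals the Lebesgue integral of f₀(C;t₁,t₂) over
the region {(t₁,t₂,u₁,u₂) : t₁ > u₁ > 0, t₂ > u₂ > 0}. -/
theorem dedekindZeta_cone_two_eq_integral (β₁ β₂ : ℝ)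
    (hβ₁ : 1 < β₁) (hβ₂ : 0 < β₂) (hβ₂' : β₂ < 1) :
    (∑' p : ℕ+ × ℕ+, 1 / (coneEmb β₁ p * coneEmb β₂ p) ^ 2) =
      ∫ q in {q : ℝ × ℝ × ℝ × ℝ |
          q.2.2.1 < q.1 ∧ 0 < q.2.2.1 ∧ q.2.2.2 < q.2.1 ∧ 0 < q.2.2.2},
        coneGenFun β₁ β₂ q.1 q.2.1 := by
  change _ = ∫ q in coneRegion, coneGenFun β₁ β₂ q.1 q.2.1
  have hL := fun p : ℕ+ × ℕ+ =>
    lintegral_coneRegion (coneEmb_pos (zero_lt_one.trans hβ₁) p) (coneEmb_pos hβ₂ p)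
  let F : ℕ+ × ℕ+ → ℝ × ℝ × ℝ × ℝ → ℝ :=
    fun p q => exp (-(coneEmb β₁ p * q.1) - coneEmb β₂ p * q.2.1)
  have hm : ∀ p, AEStronglyMeasurable (F p) (volume.restrict coneRegion) := fun p =>
    Measurable.aestronglyMeasurable (by fun_prop)
  have hF0 : ∀ p q, 0 ≤ F p q := fun p q => (exp_pos _).le
  have hI : ∀ p, ∫ q in coneRegion, F p q = 1 / (coneEmb β₁ p * coneEmb β₂ p) ^ 2 := fun p => by
    rw [integral_eq_lintegral_of_nonneg_ae (.of_forall (hF0 p)) (hm p), hL p,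
      ENNReal.toReal_ofReal (by positivity)]
  have hint : ∀ p, Integrable (F p) (volume.restrict coneRegion) := fun p => by
    refine ⟨hm p, ?_⟩
    rw [hasFiniteIntegral_iff_ofReal (.of_forall (hF0 p)), hL p]
    exact ENNReal.ofReal_lt_top
  have hsum : Summable fun p => ∫ q in coneRegion, ‖F p q‖ := by
    simp_rw [Real.norm_of_nonneg (hF0 _ _), hI]
    exact summable_cone hβ₁ hβ₂
  have h := (hasSum_integral_of_summable_integral_norm hint hsum).tsum_eq
  simp_rw [hI] at h
  exact h
end

section
/- With tangential base points as in the paper (realized by restricting to the surface y_i = x_i^{β_j}), the iterated integral of ω₁(x₁,x₂) ∧ ω₁(x₃,x₄) ∧ ω₀(x₅,x₆) over the region {0 < x₁ < x₃ < x₅ < 1, 0 < x₂ < x₄ < x₆ < 1} equals (β₂−β₁)³·ζ_{K;C}(1,2). In coordinates: the Lebesgue integral of the function (x₁,…,x₆) ↦ [x₁^{β₁}x₂^{β₂} / ((1−x₁x₂)(1−x₁^{β₁}x₂^{β₂}))] · [x₃^{β₁}x₄^{β₂} / ((1−x₃x₄)(1−x₃^{β₁}x₄^{β₂}))] · [1/(x₅·x₆)]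 over the region {(x₁,…,x₆) ∈ ℝ⁶ : 0 < x₁ < x₃ < x₅ < 1, 0 < x₂ < x₄ < x₆ < 1} equals ζ_{K;C}(1,2) = ∑_{γ,δ∈C} 1/(N(γ)·N(γ+δ)²). -/
/-!
The kernel `u ^ β₁ * v ^ β₂ / ((1 - u * v) * (1 - u ^ β₁ * v ^ β₂))` is a product of two geometric
series, hence equals `∑ u ^ (γ₁ - 1) * v ^ (γ₂ - 1)` over the elements `γ` of the cone
(`ofReal_kernel`). Inserting this for `(x₁, x₂)` (summation over `γ`) and for `(x₃, x₄)` (summation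
over `δ`) turns the integrand into a series of monomials. Each monomial is integrated over the
region one variable at a time, starting with `x₁`, by `∫₀ᵗ x ^ (c - 1) = t ^ c / c`; this gives
`1 / (N(γ) * N(γ + δ) ^ 2)` (`lintegral_term`).

All terms are nonnegative, so everything is done with `ℝ≥0∞`-valued integrals and sums, where
exchanging them needs no convergence. Passing back to `ℝ` with `ENNReal.toReal` needs no
convergence either: were the common value infinite, the Bochner integral and the real `tsum` would
both be `0`.
-/

open MeasureTheory Real

/-- The function `x ^ (c - 1)` restricted to `0 < x < t`, with values in `ℝ≥0∞`. -/
noncomputable def truncPow (c t x : ℝ) : ENNReal :=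
  if 0 < x ∧ x < t then ENNReal.ofReal (x ^ (c - 1)) else 0

lemma measurable_truncPow {α : Type*} [MeasurableSpace α] (c : ℝ) {t x : α → ℝ}
    (ht : Measurable t) (hx : Measurable x) : Measurable fun a => truncPow c (t a) (x a) := by
  unfold truncPow
  refine Measurable.ite ?_ (by fun_prop) measurable_const
  exact (measurableSet_lt measurable_const hx).inter (measurableSet_lt hx ht)

lemma lintegral_truncPow {c t : ℝ} (hc : 0 < c) (ht : 0 < t) :
    ∫⁻ x, truncPow c t x = ENNReal.ofReal (t ^ c / c) := by
  have h1 : ∀ x, truncPow c t x =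
      (Set.Ioo 0 t).indicator (fun x => ENNReal.ofReal (x ^ (c - 1))) x := by
    intro x
    simp [truncPow, Set.indicator_apply]
  simp_rw [h1]
  rw [lintegral_indicator measurableSet_Ioo, restrict_Ioo_eq_restrict_Ioc]
  have hint : IntervalIntegrable (fun x : ℝ => x ^ (c - 1)) volume 0 t :=
    intervalIntegral.intervalIntegrable_rpow' (by linarith)
  rw [← ofReal_integral_eq_lintegral_ofReal]
  · rw [← intervalIntegral.integral_of_le ht.le, integral_rpow (Or.inl (by linarith))]
    simp [Real.zero_rpow hc.ne']
  · exact (intervalIntegrable_iff_integrableOn_Ioc_of_le ht.le).1 hint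
  · refine (ae_restrict_iff' measurableSet_Ioc).2 (ae_of_all _ fun x hx => ?_)
    exact Real.rpow_nonneg hx.1.le _

/-- Integrating out the first coordinate of a product against a truncated power whose upper bound
depends on the remaining coordinates. -/
lemma lintegral_truncPow_mul {α : Type*} [MeasureSpace α] [SFinite (volume : Measure α)]
    {c : ℝ} (hc : 0 < c) {h : α → ℝ} {G : α → ENNReal} (hh : Measurable h) (hG : Measurable G)
    (hpos : ∀ w, G w ≠ 0 → 0 < h w) :
    ∫⁻ z : ℝ × α, truncPow c (h z.2) z.1 * G z.2 =
      ∫⁻ w, ENNReal.ofReal (h w ^ c / c) * G w := by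
  have hm : Measurable fun z : ℝ × α => truncPow c (h z.2) z.1 * G z.2 :=
    (measurable_truncPow c (hh.comp measurable_snd) measurable_fst).mul (hG.comp measurable_snd)
  rw [Measure.volume_eq_prod, lintegral_prod_symm _ hm.aemeasurable]
  refine lintegral_congr fun w => ?_
  simp only
  rw [lintegral_mul_const _ (measurable_truncPow c measurable_const (x := fun x => x) measurable_id)]
  by_cases hw : G w = 0
  · simp [hw]
  · rw [lintegral_truncPow hc (hpos w hw)]

lemma truncPow_pos {c t x : ℝ} (h : truncPow c t x ≠ 0) : 0 < x := by
  unfold truncPow at h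
  split_ifs at h with h1
  · exact h1.1
  · simp at h

lemma ofReal_mul_truncPow {c d t x : ℝ} (hc : 0 < c) :
    ENNReal.ofReal (x ^ c / c) * truncPow d t x =
      ENNReal.ofReal (1 / c) * truncPow (c + d) t x := by
  unfold truncPow
  split_ifs with h
  · rw [← ENNReal.ofReal_mul (div_nonneg (Real.rpow_nonneg h.1.le _) hc.le),
      ← ENNReal.ofReal_mul (by positivity), add_sub_assoc, Real.rpow_add h.1]
    congr 1
    ring
  · simp

/-- The six-fold integral of one monomial; `c₁, c₂` are the embeddings of `γ` and `d₁, d₂` those of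
`δ`. The exponent parameter `0` of the last two factors encodes `1 / (x₅ * x₆)`. -/
lemma lintegral_term {c₁ c₂ d₁ d₂ : ℝ} (hc₁ : 0 < c₁) (hc₂ : 0 < c₂) (hd₁ : 0 < d₁)
    (hd₂ : 0 < d₂) :
    ∫⁻ x : ℝ × ℝ × ℝ × ℝ × ℝ × ℝ, truncPow c₁ x.2.2.1 x.1 *
      (truncPow c₂ x.2.2.2.1 x.2.1 * (truncPow d₁ x.2.2.2.2.1 x.2.2.1 *
        (truncPow d₂ x.2.2.2.2.2 x.2.2.2.1 *
          (truncPow 0 1 x.2.2.2.2.1 * truncPow 0 1 x.2.2.2.2.2)))) =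
      ENNReal.ofReal (1 / ((c₁ * c₂) * ((c₁ + d₁) * (c₂ + d₂)) ^ 2)) := by
  have he₁ : 0 < c₁ + d₁ := by positivity
  have he₂ : 0 < c₂ + d₂ := by positivity
  -- Integrating out `x₁` leaves `x₃ ^ c₁ / c₁`, which raises the exponent parameter of `x₃` to
  -- `c₁ + d₁`; each later variable is treated in the same way.
  rw [lintegral_truncPow_mul (α := ℝ × ℝ × ℝ × ℝ × ℝ) hc₁ (h := fun w => w.2.1)
    (G := fun w => truncPow c₂ w.2.2.1 w.1 * (truncPow d₁ w.2.2.2.1 w.2.1 *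
        (truncPow d₂ w.2.2.2.2 w.2.2.1 *
          (truncPow 0 1 w.2.2.2.1 * truncPow 0 1 w.2.2.2.2)))) (by fun_prop)
    (by
      refine .mul ?_ (.mul ?_ (.mul ?_ (.mul ?_ ?_))) <;>
      exact measurable_truncPow _ (by fun_prop) (by fun_prop))
    (fun w hw => truncPow_pos (left_ne_zero_of_mul (right_ne_zero_of_mul hw)))]
  have e1 : ∀ w : ℝ × ℝ × ℝ × ℝ × ℝ, ENNReal.ofReal (w.2.1 ^ c₁ / c₁) *
      (truncPow c₂ w.2.2.1 w.1 * (truncPow d₁ w.2.2.2.1 w.2.1 *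
        (truncPow d₂ w.2.2.2.2 w.2.2.1 *
          (truncPow 0 1 w.2.2.2.1 * truncPow 0 1 w.2.2.2.2)))) =
      truncPow c₂ w.2.2.1 w.1 * (ENNReal.ofReal (1 / c₁) * (truncPow (c₁ + d₁) w.2.2.2.1 w.2.1 *
        (truncPow d₂ w.2.2.2.2 w.2.2.1 *
          (truncPow 0 1 w.2.2.2.1 * truncPow 0 1 w.2.2.2.2)))) := by
    intro w
    rw [mul_left_comm, ← mul_assoc (ENNReal.ofReal _) (truncPow d₁ _ _), ofReal_mul_truncPow hc₁,
      mul_assoc (ENNReal.ofReal _) (truncPow (c₁ + d₁) _ _)]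
  simp_rw [e1]
  rw [lintegral_truncPow_mul (α := ℝ × ℝ × ℝ × ℝ) hc₂ (h := fun w => w.2.1)
    (G := fun w => ENNReal.ofReal (1 / c₁) * (truncPow (c₁ + d₁) w.2.2.1 w.1 *
        (truncPow d₂ w.2.2.2 w.2.1 *
          (truncPow 0 1 w.2.2.1 * truncPow 0 1 w.2.2.2)))) (by fun_prop)
    (by
      refine .const_mul (.mul ?_ (.mul ?_ (.mul ?_ ?_))) _ <;>
      exact measurable_truncPow _ (by fun_prop) (by fun_prop))
    (fun w hw => truncPow_pos (left_ne_zero_of_mul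
      (right_ne_zero_of_mul (right_ne_zero_of_mul hw))))]
  have e2 : ∀ w : ℝ × ℝ × ℝ × ℝ, ENNReal.ofReal (w.2.1 ^ c₂ / c₂) *
      (ENNReal.ofReal (1 / c₁) * (truncPow (c₁ + d₁) w.2.2.1 w.1 *
        (truncPow d₂ w.2.2.2 w.2.1 * (truncPow 0 1 w.2.2.1 * truncPow 0 1 w.2.2.2)))) =
      truncPow (c₁ + d₁) w.2.2.1 w.1 * (ENNReal.ofReal (1 / c₁) * ENNReal.ofReal (1 / c₂) *
        (truncPow (c₂ + d₂) w.2.2.2 w.2.1 *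
          (truncPow 0 1 w.2.2.1 * truncPow 0 1 w.2.2.2))) := by
    intro w
    have := ofReal_mul_truncPow (c := c₂) (d := d₂) (t := w.2.2.2) (x := w.2.1) hc₂
    calc _ = truncPow (c₁ + d₁) w.2.2.1 w.1 * (ENNReal.ofReal (1 / c₁) *
        ((ENNReal.ofReal (w.2.1 ^ c₂ / c₂) * truncPow d₂ w.2.2.2 w.2.1) *
          (truncPow 0 1 w.2.2.1 * truncPow 0 1 w.2.2.2))) := by ring
      _ = _ := by rw [this]; ring
  simp_rw [e2]
  rw [lintegral_truncPow_mul (α := ℝ × ℝ × ℝ) he₁ (h := fun w => w.2.1)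
    (G := fun w => ENNReal.ofReal (1 / c₁) * ENNReal.ofReal (1 / c₂) *
        (truncPow (c₂ + d₂) w.2.2 w.1 * (truncPow 0 1 w.2.1 * truncPow 0 1 w.2.2))) (by fun_prop)
    (by
      refine .const_mul (.mul ?_ (.mul ?_ ?_)) _ <;>
      exact measurable_truncPow _ (by fun_prop) (by fun_prop))
    (fun w hw => truncPow_pos (left_ne_zero_of_mul
      (right_ne_zero_of_mul (right_ne_zero_of_mul hw))))]
  have e3 : ∀ w : ℝ × ℝ × ℝ, ENNReal.ofReal (w.2.1 ^ (c₁ + d₁) / (c₁ + d₁)) *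
      (ENNReal.ofReal (1 / c₁) * ENNReal.ofReal (1 / c₂) *
        (truncPow (c₂ + d₂) w.2.2 w.1 * (truncPow 0 1 w.2.1 * truncPow 0 1 w.2.2))) =
      truncPow (c₂ + d₂) w.2.2 w.1 * (ENNReal.ofReal (1 / c₁) * ENNReal.ofReal (1 / c₂) *
        ENNReal.ofReal (1 / (c₁ + d₁)) *
          (truncPow (c₁ + d₁) 1 w.2.1 * truncPow 0 1 w.2.2)) := by
    intro w
    have := ofReal_mul_truncPow (c := c₁ + d₁) (d := 0) (t := 1) (x := w.2.1) he₁
    rw [add_zero] at this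
    calc _ = truncPow (c₂ + d₂) w.2.2 w.1 * (ENNReal.ofReal (1 / c₁) * ENNReal.ofReal (1 / c₂) *
        ((ENNReal.ofReal (w.2.1 ^ (c₁ + d₁) / (c₁ + d₁)) * truncPow 0 1 w.2.1) *
          truncPow 0 1 w.2.2)) := by ring
      _ = _ := by rw [this]; ring
  simp_rw [e3]
  rw [lintegral_truncPow_mul (α := ℝ × ℝ) he₂ (h := fun w => w.2)
    (G := fun w => ENNReal.ofReal (1 / c₁) * ENNReal.ofReal (1 / c₂) *
        ENNReal.ofReal (1 / (c₁ + d₁)) * (truncPow (c₁ + d₁) 1 w.1 * truncPow 0 1 w.2))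
    (by fun_prop)
    (by
      refine .const_mul (.mul ?_ ?_) _ <;>
      exact measurable_truncPow _ (by fun_prop) (by fun_prop))
    (fun w hw => truncPow_pos (right_ne_zero_of_mul (right_ne_zero_of_mul hw)))]
  have e4 : ∀ w : ℝ × ℝ, ENNReal.ofReal (w.2 ^ (c₂ + d₂) / (c₂ + d₂)) *
      (ENNReal.ofReal (1 / c₁) * ENNReal.ofReal (1 / c₂) *
        ENNReal.ofReal (1 / (c₁ + d₁)) * (truncPow (c₁ + d₁) 1 w.1 * truncPow 0 1 w.2)) =
      truncPow (c₁ + d₁) 1 w.1 * (ENNReal.ofReal (1 / c₁) * ENNReal.ofReal (1 / c₂) *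
        ENNReal.ofReal (1 / (c₁ + d₁)) * ENNReal.ofReal (1 / (c₂ + d₂)) *
          truncPow (c₂ + d₂) 1 w.2) := by
    intro w
    have := ofReal_mul_truncPow (c := c₂ + d₂) (d := 0) (t := 1) (x := w.2) he₂
    rw [add_zero] at this
    calc _ = truncPow (c₁ + d₁) 1 w.1 * (ENNReal.ofReal (1 / c₁) * ENNReal.ofReal (1 / c₂) *
        ENNReal.ofReal (1 / (c₁ + d₁)) *
        (ENNReal.ofReal (w.2 ^ (c₂ + d₂) / (c₂ + d₂)) * truncPow 0 1 w.2)) := by ring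
      _ = _ := by rw [this]; ring
  simp_rw [e4]
  -- The upper bound of `x₅` and `x₆` is `1`, so only constants remain.
  rw [lintegral_truncPow_mul (α := ℝ) he₁ (h := fun _ => 1)
    (G := fun w => ENNReal.ofReal (1 / c₁) * ENNReal.ofReal (1 / c₂) *
        ENNReal.ofReal (1 / (c₁ + d₁)) * ENNReal.ofReal (1 / (c₂ + d₂)) *
          truncPow (c₂ + d₂) 1 w) (by fun_prop)
    (.const_mul (measurable_truncPow _ (by fun_prop) (by fun_prop)) _) (fun _ _ => one_pos),
    lintegral_const_mul _
      (.const_mul (measurable_truncPow _ (by fun_prop) (by fun_prop)) _),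
    lintegral_const_mul _ (measurable_truncPow _ (by fun_prop) (by fun_prop)),
    lintegral_truncPow he₂ one_pos]
  simp only [Real.one_rpow]
  repeat rw [← ENNReal.ofReal_mul (by positivity)]
  congr 1
  field_simp

/-- Expansion of the kernel of `ω₁` over the cone, as a product of two geometric series. -/
lemma ofReal_kernel {β₁ β₂ u v : ℝ} (hβ₁ : 0 < β₁) (hβ₂ : 0 < β₂) (hu : 0 < u) (hu1 : u < 1)
    (hv : 0 < v) (hv1 : v < 1) :
    ENNReal.ofReal (u ^ β₁ * v ^ β₂ / ((1 - u * v) * (1 - u ^ β₁ * v ^ β₂))) =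
      ∑' p : ℕ+ × ℕ+, ENNReal.ofReal (u ^ (coneEmb β₁ p - 1)) *
        ENNReal.ofReal (v ^ (coneEmb β₂ p - 1)) := by
  have hq0 : 0 < u * v := by positivity
  have hq1 : u * v < 1 := by nlinarith
  set r := u ^ β₁ * v ^ β₂ with hr
  have hr0 : 0 < r := by positivity
  have hr1 : r < 1 :=
    mul_lt_one_of_nonneg_of_lt_one_left (by positivity) (Real.rpow_lt_one hu.le hu1 hβ₁)
      (Real.rpow_lt_one hv.le hv1 hβ₂).le
  have hterm : ∀ p : ℕ+ × ℕ+, ENNReal.ofReal (u ^ (coneEmb β₁ p - 1)) *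
        ENNReal.ofReal (v ^ (coneEmb β₂ p - 1)) =
      ENNReal.ofReal (u * v) ^ ((p.1 : ℕ) - 1) * ENNReal.ofReal r ^ (p.2 : ℕ) := by
    rintro ⟨a, b⟩
    have ha : (((a : ℕ) - 1 : ℕ) : ℝ) = (a : ℕ) - 1 := by
      have h : 1 ≤ (a : ℕ) := a.pos
      rw [Nat.cast_sub h, Nat.cast_one]
    have key : ∀ w β : ℝ, 0 < w → w ^ (coneEmb β (a, b) - 1) =
        w ^ ((a : ℕ) - 1) * (w ^ β) ^ (b : ℕ) := by
      intro w β hw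
      rw [← Real.rpow_natCast, ← Real.rpow_natCast, ← Real.rpow_mul hw.le, ← Real.rpow_add hw, ha]
      congr 1
      simp only [coneEmb]
      ring
    rw [key u β₁ hu, key v β₂ hv, ← ENNReal.ofReal_mul (by positivity),
      ← ENNReal.ofReal_pow hq0.le, ← ENNReal.ofReal_pow hr0.le,
      ← ENNReal.ofReal_mul (by positivity), hr]
    congr 1
    simp only [mul_pow]
    ring
  simp_rw [hterm]
  rw [ENNReal.tsum_prod']
  simp_rw [ENNReal.tsum_mul_left, ENNReal.tsum_mul_right]
  have hs1 : ∑' a : ℕ+, ENNReal.ofReal (u * v) ^ ((a : ℕ) - 1) =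
      ENNReal.ofReal (1 - u * v)⁻¹ := by
    rw [tsum_pnat_eq_tsum_succ (f := fun n : ℕ => ENNReal.ofReal (u * v) ^ (n - 1))]
    simp only [Nat.add_sub_cancel]
    rw [ENNReal.tsum_geometric, ENNReal.ofReal_inv_of_pos (by linarith),
      ENNReal.ofReal_sub _ hq0.le, ENNReal.ofReal_one]
  have hs2 : ∑' b : ℕ+, ENNReal.ofReal r ^ (b : ℕ) = ENNReal.ofReal (r * (1 - r)⁻¹) := by
    rw [tsum_pnat_eq_tsum_succ (f := fun n : ℕ => ENNReal.ofReal r ^ n)]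
    simp only [pow_succ]
    rw [ENNReal.tsum_mul_right, ENNReal.tsum_geometric, mul_comm, ENNReal.ofReal_mul hr0.le,
      ENNReal.ofReal_inv_of_pos (by linarith), ENNReal.ofReal_sub _ hr0.le, ENNReal.ofReal_one]
  have h1 : 0 < 1 - u * v := by linarith
  rw [hs1, hs2, ← ENNReal.ofReal_mul (by positivity)]
  congr 1
  field_simp

/-- With the tangential base points realized by restricting to the surfaces
yᵢ = xᵢ^{β₁} (i odd), yᵢ = xᵢ^{β₂} (i even), the integral of
ω₁(x₁,x₂)∧ω₁(x₃,x₄)∧ω₀(x₅,x₆) over {0 < x₁ < x₃ < x₅ < 1, 0 < x₂ < x₄ < x₆ < 1}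
equals (β₂−β₁)³·ζ_{K;C}(1,2); in coordinates (the factor (β₂−β₁)³ being divided
out on both sides), the Lebesgue integral below equals
ζ_{K;C}(1,2) = ∑_{γ,δ∈C} 1/(N(γ)·N(γ+δ)²).
Here x = (x₁,x₂,x₃,x₄,x₅,x₆) and the pair (γ,δ) ∈ C × C is parametrized by
pairs of pairs of positive integers, with γ = a + bβ and γ + δ = (a+c) + (b+d)β. -/
theorem integral_omegas_eq_multipleDedekindZeta_one_two (β₁ β₂ : ℝ)
    (hβ₁ : 1 < β₁) (hβ₂ : 0 < β₂) (hβ₂' : β₂ < 1) :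
    (∫ x in {x : ℝ × ℝ × ℝ × ℝ × ℝ × ℝ |
        0 < x.1 ∧ x.1 < x.2.2.1 ∧ x.2.2.1 < x.2.2.2.2.1 ∧ x.2.2.2.2.1 < 1 ∧
        0 < x.2.1 ∧ x.2.1 < x.2.2.2.1 ∧ x.2.2.2.1 < x.2.2.2.2.2 ∧ x.2.2.2.2.2 < 1},
      (x.1 ^ β₁ * x.2.1 ^ β₂ /
          ((1 - x.1 * x.2.1) * (1 - x.1 ^ β₁ * x.2.1 ^ β₂))) *
        (x.2.2.1 ^ β₁ * x.2.2.2.1 ^ β₂ /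
          ((1 - x.2.2.1 * x.2.2.2.1) * (1 - x.2.2.1 ^ β₁ * x.2.2.2.1 ^ β₂))) *
        (1 / (x.2.2.2.2.1 * x.2.2.2.2.2))) =
      ∑' P : (ℕ+ × ℕ+) × (ℕ+ × ℕ+),
        1 / ((coneEmb β₁ P.1 * coneEmb β₂ P.1) *
          ((coneEmb β₁ P.1 + coneEmb β₁ P.2) * (coneEmb β₂ P.1 + coneEmb β₂ P.2)) ^ 2) := by
  have hβ₁0 : 0 < β₁ := by linarith
  set S := {x : ℝ × ℝ × ℝ × ℝ × ℝ × ℝ |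
        0 < x.1 ∧ x.1 < x.2.2.1 ∧ x.2.2.1 < x.2.2.2.2.1 ∧ x.2.2.2.2.1 < 1 ∧
        0 < x.2.1 ∧ x.2.1 < x.2.2.2.1 ∧ x.2.2.2.1 < x.2.2.2.2.2 ∧ x.2.2.2.2.2 < 1} with hSdef
  have hS : MeasurableSet S := by
    rw [hSdef]
    simp only [Set.ofPred_and]
    refine .inter ?_ (.inter ?_ (.inter ?_ (.inter ?_ (.inter ?_ (.inter ?_ (.inter ?_ ?_))))))
      <;> exact measurableSet_lt (by fun_prop) (by fun_prop)
  have hker : ∀ u v : ℝ, 0 < u → u < 1 → 0 < v → v < 1 →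
      0 ≤ u ^ β₁ * v ^ β₂ / ((1 - u * v) * (1 - u ^ β₁ * v ^ β₂)) := by
    intro u v hu hu1 hv hv1
    have h1 : u * v < 1 := by nlinarith
    have h2 : u ^ β₁ * v ^ β₂ < 1 :=
      mul_lt_one_of_nonneg_of_lt_one_left (by positivity) (Real.rpow_lt_one hu.le hu1 hβ₁0)
        (Real.rpow_lt_one hv.le hv1 hβ₂).le
    have h3 : 0 < 1 - u * v := by linarith
    have h4 : 0 < 1 - u ^ β₁ * v ^ β₂ := by linarith
    positivity
  rw [integral_eq_lintegral_of_nonneg_ae]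
  rotate_left
  · refine (ae_restrict_iff' hS).2 (ae_of_all _ ?_)
    rintro ⟨x₁, x₂, x₃, x₄, x₅, x₆⟩ ⟨h1, h2, h3, h4, h5, h6, h7, h8⟩
    simp only at h1 h2 h3 h4 h5 h6 h7 h8
    have hx5 : 0 < x₅ := by linarith
    have hx6 : 0 < x₆ := by linarith
    exact mul_nonneg (mul_nonneg
      (hker x₁ x₂ h1 (by linarith) h5 (by linarith))
      (hker x₃ x₄ (by linarith) (by linarith) (by linarith) (by linarith))) (by positivity)
  · exact Measurable.aestronglyMeasurable (by fun_prop)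
  have hpos₁ : ∀ p, 0 < coneEmb β₁ p := coneEmb_pos hβ₁0
  have hpos₂ : ∀ p, 0 < coneEmb β₂ p := coneEmb_pos hβ₂
  have hmain : ∀ P : (ℕ+ × ℕ+) × (ℕ+ × ℕ+),
      1 / ((coneEmb β₁ P.1 * coneEmb β₂ P.1) *
          ((coneEmb β₁ P.1 + coneEmb β₁ P.2) * (coneEmb β₂ P.1 + coneEmb β₂ P.2)) ^ 2) =
      (ENNReal.ofReal (1 / ((coneEmb β₁ P.1 * coneEmb β₂ P.1) *
          ((coneEmb β₁ P.1 + coneEmb β₁ P.2) *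
            (coneEmb β₂ P.1 + coneEmb β₂ P.2)) ^ 2))).toReal := by
    intro P
    have := hpos₁ P.1
    have := hpos₂ P.1
    rw [ENNReal.toReal_ofReal (by positivity)]
  rw [tsum_congr hmain]
  rw [← ENNReal.tsum_toReal_eq (fun _ => ENNReal.ofReal_ne_top)]
  congr 1
  rw [tsum_congr fun P : (ℕ+ × ℕ+) × (ℕ+ × ℕ+) =>
    (lintegral_term (hpos₁ P.1) (hpos₂ P.1) (hpos₁ P.2) (hpos₂ P.2)).symm]
  rw [← lintegral_tsum]
  swap
  · intro P
    refine Measurable.aemeasurable (.mul ?_ (.mul ?_ (.mul ?_ (.mul ?_ (.mul ?_ ?_))))) <;>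
      exact measurable_truncPow _ (by fun_prop) (by fun_prop)
  rw [← lintegral_indicator hS]
  refine lintegral_congr ?_
  rintro ⟨x₁, x₂, x₃, x₄, x₅, x₆⟩
  by_cases hx : (x₁, x₂, x₃, x₄, x₅, x₆) ∈ S
  · rw [Set.indicator_of_mem hx]
    obtain ⟨h1, h2, h3, h4, h5, h6, h7, h8⟩ := hx
    simp only at h1 h2 h3 h4 h5 h6 h7 h8 ⊢
    have hx3 : 0 < x₃ := by linarith
    have hx4 : 0 < x₄ := by linarith
    have hx5 : 0 < x₅ := by linarith
    have hx6 : 0 < x₆ := by linarith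
    have k1 := hker x₁ x₂ h1 (by linarith) h5 (by linarith)
    have k2 := hker x₃ x₄ hx3 (by linarith) hx4 (by linarith)
    rw [ENNReal.tsum_prod', ENNReal.ofReal_mul (mul_nonneg k1 k2), ENNReal.ofReal_mul k1,
      ofReal_kernel hβ₁0 hβ₂ h1 (by linarith) h5 (by linarith),
      ofReal_kernel hβ₁0 hβ₂ hx3 (by linarith) hx4 (by linarith),
      ← ENNReal.tsum_mul_right, ← ENNReal.tsum_mul_right]
    refine tsum_congr fun p => ?_
    rw [← ENNReal.tsum_mul_left, ← ENNReal.tsum_mul_right]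
    refine tsum_congr fun q => ?_
    have h56 : ENNReal.ofReal (1 / (x₅ * x₆)) =
        ENNReal.ofReal (x₅ ^ ((0 : ℝ) - 1)) * ENNReal.ofReal (x₆ ^ ((0 : ℝ) - 1)) := by
      rw [← ENNReal.ofReal_mul (by positivity), zero_sub, Real.rpow_neg_one, Real.rpow_neg_one,
        one_div, mul_inv]
    simp only [truncPow, h1, h2, h3, h4, h5, h6, h7, h8, hx3, hx4, hx5, hx6, and_self, if_true]
    rw [h56]
    ring
  -- Outside the region one of the six truncations vanishes.
  · rw [Set.indicator_of_notMem hx]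
    symm
    refine ENNReal.tsum_eq_zero.2 fun P => ?_
    by_contra hne
    apply hx
    simp only [truncPow, mul_eq_zero, not_or, ite_eq_right_iff, not_forall] at hne
    obtain ⟨⟨a1, -⟩, ⟨a2, -⟩, ⟨a3, -⟩, ⟨a4, -⟩, ⟨a5, -⟩, ⟨a6, -⟩⟩ := hne
    exact ⟨a1.1, a1.2, a3.2, a5.2, a2.1, a2.2, a4.2, a6.2⟩
end

section
/- The series defining the multiple Dedekind zeta value ζ_{K;C}(1,2) converges: the function (γ,δ) ↦ 1/(N(γ)·N(γ+δ)²) is summable over C × C; equivalently, the fourfold series ∑_{a,b,c,d≥1} 1/((a+bβ₁)(a+bβ₂)·((a+c)+(b+d)β₁)²·((a+c)+(b+d)β₂)²) converges. -/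
/-!
On the cone, `a + b β₁ ≥ a + b` and `a + b β₂ ≥ β₂ (a + b)`, so with `s = a + b` and `t = c + d`
the general term is at most `β₂⁻³ / (s² (s + t)⁴)`. Since `(s + t)⁴ ≥ s t³`, this is at most
`β₂⁻³ / (s³ t³)`, and `s³ = s^(3/2) s^(3/2) ≥ a^(3/2) b^(3/2)` (likewise for `t`). The series is
therefore dominated by a constant times a product of four convergent series `∑ n^(-3/2)`.
-/

lemma summable_pnat_rpow_three_halves :
    Summable (fun n : ℕ+ => 1 / (n : ℝ) ^ (3 / 2 : ℝ)) :=
  (Real.summable_one_div_nat_rpow.mpr (by norm_num : (1 : ℝ) < 3 / 2)).comp_injective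
    PNat.coe_injective

lemma rpow_mul_rpow_le_add_cube {x y : ℝ} (hx : 0 < x) (hy : 0 < y) :
    x ^ (3 / 2 : ℝ) * y ^ (3 / 2 : ℝ) ≤ (x + y) ^ 3 := by
  calc x ^ (3 / 2 : ℝ) * y ^ (3 / 2 : ℝ)
      ≤ (x + y) ^ (3 / 2 : ℝ) * (x + y) ^ (3 / 2 : ℝ) := by
        gcongr <;> linarith
    _ = (x + y) ^ 3 := by
        rw [← Real.rpow_add (by positivity), ← Real.rpow_natCast]
        norm_num

/-- The lower bound on the denominator in terms of `s = a + b` and `t = c + d`. -/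
lemma le_norm_mul_norm_sq {β₁ β₂ a b c d : ℝ} (hβ₁ : 1 < β₁) (hβ₂ : 0 < β₂) (hβ₂' : β₂ < 1)
    (ha : 0 < a) (hb : 0 < b) (hc : 0 < c) (hd : 0 < d) :
    β₂ ^ 3 * ((a + b) ^ 3 * (c + d) ^ 3) ≤
      ((a + b * β₁) * (a + b * β₂)) *
        (((a + c) + (b + d) * β₁) ^ 2 * ((a + c) + (b + d) * β₂) ^ 2) := by
  have first : ∀ x y : ℝ, 0 < x → 0 < y → x + y ≤ x + y * β₁ := fun x y hx hy => by nlinarith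
  have second : ∀ x y : ℝ, 0 < x → 0 < y → β₂ * (x + y) ≤ x + y * β₂ :=
    fun x y hx hy => by nlinarith
  have h1 := first a b ha hb
  have h2 := second a b ha hb
  have h3 := first (a + c) (b + d) (by positivity) (by positivity)
  have h4 := second (a + c) (b + d) (by positivity) (by positivity)
  have key : (a + b) * (c + d) ^ 3 ≤ (a + c + (b + d)) ^ 4 := by
    calc (a + b) * (c + d) ^ 3 ≤ (a + c + (b + d)) * (a + c + (b + d)) ^ 3 := by
          gcongr ?_ * ?_ ^ 3 <;> linarith
      _ = _ := by ring
  calc β₂ ^ 3 * ((a + b) ^ 3 * (c + d) ^ 3)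
      = β₂ ^ 3 * (a + b) ^ 2 * ((a + b) * (c + d) ^ 3) := by ring
    _ ≤ β₂ ^ 3 * (a + b) ^ 2 * (a + c + (b + d)) ^ 4 := by gcongr
    _ = ((a + b) * (β₂ * (a + b))) *
          ((a + c + (b + d)) ^ 2 * (β₂ * (a + c + (b + d))) ^ 2) := by ring
    _ ≤ _ := by gcongr

/-- The series defining ζ_{K;C}(1,2) converges: the fourfold series
∑_{a,b,c,d≥1} 1/((a+bβ₁)(a+bβ₂)·((a+c)+(b+d)β₁)²·((a+c)+(b+d)β₂)²) is summable,
where γ = a + bβ and δ = c + dβ range over the cone C, and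
N(γ) = (a+bβ₁)(a+bβ₂), N(γ+δ) = ((a+c)+(b+d)β₁)((a+c)+(b+d)β₂). -/
theorem summable_multipleDedekindZeta_cone_one_two (β₁ β₂ : ℝ)
    (hβ₁ : 1 < β₁) (hβ₂ : 0 < β₂) (hβ₂' : β₂ < 1) :
    Summable (fun P : (ℕ+ × ℕ+) × (ℕ+ × ℕ+) =>
      1 / ((((P.1.1 : ℝ) + (P.1.2 : ℝ) * β₁) * ((P.1.1 : ℝ) + (P.1.2 : ℝ) * β₂)) *
        ((((P.1.1 : ℝ) + (P.2.1 : ℝ)) + ((P.1.2 : ℝ) + (P.2.2 : ℝ)) * β₁) ^ 2 *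
          (((P.1.1 : ℝ) + (P.2.1 : ℝ)) + ((P.1.2 : ℝ) + (P.2.2 : ℝ)) * β₂) ^ 2))) := by
  have hs := summable_pnat_rpow_three_halves
  have hs2 := hs.mul_of_nonneg hs (fun n => by positivity) (fun n => by positivity)
  have hs4 := hs2.mul_of_nonneg hs2 (fun n => by positivity) (fun n => by positivity)
  refine Summable.of_nonneg_of_le (fun P => ?_) (fun P => ?_) (hs4.mul_left (1 / β₂ ^ 3))
  · have : 0 < β₁ := by linarith
    positivity
  · obtain ⟨⟨a, b⟩, ⟨c, d⟩⟩ := P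
    have pos : ∀ n : ℕ+, (0 : ℝ) < n := fun n => by exact_mod_cast n.pos
    have ha := pos a
    have hb := pos b
    have hc := pos c
    have hd := pos d
    simp only [one_div_mul_one_div]
    refine one_div_le_one_div_of_le (by positivity) ?_
    refine le_trans ?_ (le_norm_mul_norm_sq hβ₁ hβ₂ hβ₂' ha hb hc hd)
    gcongr
    · exact rpow_mul_rpow_le_add_cube ha hb
    · exact rpow_mul_rpow_le_add_cube hc hd
end
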